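/- arXiv:2109.13625 — 2 statements merged into one kernel-verified Lean document; each statement's English description precedes it below -/
import Mathlib

section
/- In the Edwards setting, for every x ∈ X with S_x(−𝟙) > −∞, the set C_x^F = { μ ∈ M_x^F : μ(X) ≤ −S_x(−𝟙) } is compact in the weak* topology on positive Borel measures on X. -/
open MeasureTheory Filter Set
open scoped ENNReal

noncomputable section

/-- The nonnegative part of an extended real, as an element of `ℝ≥0∞`. -/
def erealToENNReal (x : EReal) : ℝ≥0∞ := if x = ⊤ then ⊤ else ENNReal.ofReal x.toReal

/-- The integral of an `EReal`-valued function: upper Lebesgue integral of the positive part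
minus that of the negative part. -/
def erealIntegral {α : Type*} [MeasurableSpace α] (μ : Measure α) (f : α → EReal) : EReal :=
  ((∫⁻ a, erealToENNReal (f a) ∂μ : ℝ≥0∞) : EReal) -
    ((∫⁻ a, erealToENNReal (-(f a)) ∂μ : ℝ≥0∞) : EReal)

/-- The Edwards setting: `F` is a cone of upper bounded, upper semicontinuous functions on `X`
with values in `[-∞, ∞)` (not necessarily containing the zero function). -/
def IsEdwardsCone {X : Type*} [TopologicalSpace X] (F : Set (X → EReal)) : Prop :=
  (∀ u ∈ F, UpperSemicontinuous u) ∧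
  (∀ u ∈ F, ∃ K : ℝ, ∀ x, u x ≤ (K : EReal)) ∧
  (∀ u ∈ F, ∀ c : ℝ, 0 < c → (fun x => (c : EReal) * u x) ∈ F) ∧
  (∀ u ∈ F, ∀ v ∈ F, (fun x => u x + v x) ∈ F)

/-- `M_x^F`: the positive (Borel) measures `μ` on `X` with `u(x) ≤ ∫ u dμ` for all `u ∈ F`. -/
def edwardsM {X : Type*} [MeasurableSpace X] (F : Set (X → EReal)) (x : X) :
    Set (Measure X) :=
  { μ | ∀ u ∈ F, u x ≤ erealIntegral μ u }

/-- `S_x(g) = sup { u(x) : u ∈ F, u ≤ g }` (`= -∞`, i.e. `sSup ∅`, if no `u ∈ F` satisfies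
`u ≤ g`). -/
def edwardsS {X : Type*} (F : Set (X → EReal)) (x : X) (g : X → EReal) : EReal :=
  sSup { t : EReal | ∃ u ∈ F, (∀ y, u y ≤ g y) ∧ t = u x }

/-- `I_x(g) = inf { ∫ g dμ : μ ∈ M_x^F }`. -/
def edwardsI {X : Type*} [MeasurableSpace X] (F : Set (X → EReal)) (x : X)
    (g : X → EReal) : EReal :=
  sInf { t : EReal | ∃ μ ∈ edwardsM F x, t = erealIntegral μ g }

/-- `C_x^F = { μ ∈ M_x^F : μ(X) ≤ -S_x(-𝟙) }`. -/
def edwardsC {X : Type*} [MeasurableSpace X] (F : Set (X → EReal)) (x : X) :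
    Set (Measure X) :=
  { μ | μ ∈ edwardsM F x ∧
      ((μ Set.univ : ℝ≥0∞) : EReal) ≤ -(edwardsS F x (fun _ => (-1 : EReal))) }

/-!
The constraint `u(x) ≤ ∫ u dμ` is weak*-closed in `μ` because `μ ↦ ∫ u dμ` is weak* upper
semicontinuous: if `u ≤ K`, then `∫ u dμ = K μ(X) - ∫ (K - u) dμ`, where the mass is weak*
continuous and the integral of the nonnegative lower semicontinuous function `K - u` is a supremum
of integrals of bounded continuous functions. Hence `M_x^F` is weak*-closed, and `C_x^F` is its
intersection with the weak*-compact set of measures of mass at most `-S_x(-𝟙) < ∞`.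
-/

section LowerSemicontinuous

variable {X : Type*}

theorem iSup_mul_indicator_lt_eq {q : ℕ → NNReal} (hq : DenseRange q) (f : X → ℝ≥0∞) (y : X) :
    ⨆ i, (q i : ℝ≥0∞) * {z | (q i : ℝ≥0∞) < f z}.indicator 1 y = f y := by
  refine le_antisymm (iSup_le fun i => ?_) (le_of_forall_lt fun b hb => ?_)
  · by_cases hi : (q i : ℝ≥0∞) < f y
    · simpa [hi] using hi.le
    · simp [hi]
  · obtain ⟨r, hbr, hrf⟩ := ENNReal.lt_iff_exists_nnreal_btwn.1 hb
    obtain ⟨i, hbi, hif⟩ := hq.exists_mem_open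
      (isOpen_Ioo.preimage ENNReal.continuous_coe) ⟨r, hbr, hrf⟩
    have hy : y ∈ {z | (q i : ℝ≥0∞) < f z} := hif
    exact lt_iSup_iff.2 ⟨i, by rwa [indicator_of_mem hy, Pi.one_apply, mul_one]⟩

variable [TopologicalSpace X] [HasOuterApproxClosed X]

theorem exists_seq_continuous_iSup_eq_indicator_of_isOpen {U : Set X} (hU : IsOpen U) :
    ∃ φ : ℕ → X → ℝ≥0∞, (∀ n, Continuous (φ n)) ∧ ∀ y, ⨆ n, φ n y = U.indicator 1 y := by
  let ψ : ℕ → BoundedContinuousFunction X NNReal := hU.isClosed_compl.apprSeq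
  have h_sub (y : X) : 1 - Uᶜ.indicator 1 y = U.indicator (1 : X → ℝ≥0∞) y := by
    by_cases hy : y ∈ U <;> simp [hy]
  have h_le (n : ℕ) (y : X) : Uᶜ.indicator (1 : X → ℝ≥0∞) y ≤ ψ n y := by
    by_cases hy : y ∈ U
    · simp [hy]
    · simp [hy, ψ, HasOuterApproxClosed.apprSeq_apply_eq_one]
  have h_tendsto (y : X) :
      Tendsto (fun n => (ψ n y : ℝ≥0∞)) atTop (nhds (Uᶜ.indicator (1 : X → ℝ≥0∞) y)) := by
    have h := tendsto_pi_nhds.1 (HasOuterApproxClosed.tendsto_apprSeq hU.isClosed_compl) y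
    convert ENNReal.tendsto_coe.2 h
    by_cases hy : y ∈ U <;> simp [hy]
  refine ⟨fun n y => 1 - ψ n y, fun n => ?_, fun y => le_antisymm (iSup_le fun n => ?_) ?_⟩
  · exact (ENNReal.continuous_sub_left ENNReal.one_ne_top).comp
      (ENNReal.continuous_coe.comp (ψ n).continuous)
  · exact (tsub_le_tsub_left (h_le n y) 1).trans_eq (h_sub y)
  · rw [← h_sub y]
    exact le_of_tendsto' (ENNReal.Tendsto.sub tendsto_const_nhds (h_tendsto y) (by simp))
      fun n => le_iSup (fun n => 1 - (ψ n y : ℝ≥0∞)) n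

theorem exists_seq_continuous_iSup_eq {f : X → ℝ≥0∞} (hf : LowerSemicontinuous f) :
    ∃ g : ℕ → X → ℝ≥0∞, (∀ n, Continuous (g n)) ∧ ∀ y, ⨆ n, g n y = f y := by
  let q := TopologicalSpace.denseSeq NNReal
  choose φ hφ hφ_sup using fun i =>
    exists_seq_continuous_iSup_eq_indicator_of_isOpen (hf.isOpen_preimage (q i))
  refine ⟨fun n y => q n.unpair.1 * φ n.unpair.1 n.unpair.2 y, fun n => ?_, fun y => ?_⟩
  · exact (ENNReal.continuous_const_mul ENNReal.coe_ne_top).comp (hφ _ _)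
  · rw [iSup_unpair fun i j => (q i : ℝ≥0∞) * φ i j y]
    simp only [← ENNReal.mul_iSup, hφ_sup]
    exact iSup_mul_indicator_lt_eq (TopologicalSpace.denseRange_denseSeq NNReal) f y

end LowerSemicontinuous

section WeakConvergence

variable {X : Type*} [TopologicalSpace X] [MeasurableSpace X] [OpensMeasurableSpace X]

theorem continuous_lintegral_finiteMeasure {f : X → ℝ≥0∞} (hf : Continuous f) {C : NNReal}
    (hC : ∀ y, f y ≤ C) : Continuous fun μ : FiniteMeasure X => ∫⁻ y, f y ∂(μ : Measure X) := by
  have hf_ne (y : X) : f y ≠ ⊤ := ne_top_of_le_ne_top ENNReal.coe_ne_top (hC y)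
  have h_dist (y z : X) : dist (f y).toNNReal (f z).toNNReal ≤ C := by
    have h_le (w : X) : (f w).toNNReal ≤ C := ENNReal.toNNReal_mono ENNReal.coe_ne_top (hC w)
    exact abs_sub_le_of_nonneg_of_le (NNReal.coe_nonneg _) (h_le y) (NNReal.coe_nonneg _) (h_le z)
  let g : BoundedContinuousFunction X NNReal := BoundedContinuousFunction.mkOfBound
    ⟨fun y => (f y).toNNReal, ENNReal.continuousOn_toNNReal.comp_continuous hf hf_ne⟩ C h_dist
  have hg (y : X) : (g y : ℝ≥0∞) = f y := ENNReal.coe_toNNReal (hf_ne y)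
  simp only [← hg, ← FiniteMeasure.testAgainstNN_coe_eq]
  exact ENNReal.continuous_coe.comp (FiniteMeasure.continuous_testAgainstNN_eval g)

theorem lowerSemicontinuous_lintegral_finiteMeasure_of_continuous {f : X → ℝ≥0∞}
    (hf : Continuous f) :
    LowerSemicontinuous fun μ : FiniteMeasure X => ∫⁻ y, f y ∂(μ : Measure X) := by
  have h_sup (y : X) : ⨆ n : ℕ, f y ⊓ n = f y := by
    rw [← inf_iSup_eq, ENNReal.iSup_natCast, inf_top_eq]
  have h_cont (n : ℕ) : Continuous fun y => f y ⊓ n := hf.inf continuous_const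
  have h_mono : Monotone fun (n : ℕ) y => f y ⊓ n :=
    fun m n hmn y => inf_le_inf_left (f y) (Nat.cast_le.2 hmn)
  simp only [← lintegral_congr h_sup, lintegral_iSup (fun n => (h_cont n).measurable) h_mono]
  exact lowerSemicontinuous_iSup fun n =>
    (continuous_lintegral_finiteMeasure (h_cont n) (C := n)
      fun y => inf_le_right).lowerSemicontinuous

theorem lowerSemicontinuous_lintegral_finiteMeasure [HasOuterApproxClosed X] {f : X → ℝ≥0∞}
    (hf : LowerSemicontinuous f) :
    LowerSemicontinuous fun μ : FiniteMeasure X => ∫⁻ y, f y ∂(μ : Measure X) := by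
  obtain ⟨g, hg, hg_sup⟩ := exists_seq_continuous_iSup_eq hf
  have h_cont (n : ℕ) : Continuous (partialSups g n) := Continuous.partialSups fun k _ => hg k
  have h_sup (y : X) : ⨆ n, partialSups g n y = f y := by
    rw [← hg_sup, ← iSup_apply, iSup_partialSups_eq, iSup_apply]
  simp only [← lintegral_congr h_sup,
    lintegral_iSup (fun n => (h_cont n).measurable) (partialSups_monotone g)]
  exact lowerSemicontinuous_iSup fun n =>
    lowerSemicontinuous_lintegral_finiteMeasure_of_continuous (h_cont n)

end WeakConvergence

section ERealIntegral

theorem erealToENNReal_eq_toENNReal (t : EReal) : erealToENNReal t = t.toENNReal := rfl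

theorem toENNReal_add_toENNReal_coe_sub {K : NNReal} {t : EReal} (ht : t ≤ (K : ℝ)) :
    t.toENNReal + ((K : ℝ) - t).toENNReal = K + (-t).toENNReal := by
  induction t with
  | bot => simp
  | top => simp at ht
  | coe t =>
    have htK : t ≤ K := EReal.coe_le_coe_iff.1 ht
    rw [← EReal.coe_neg, ← EReal.coe_sub, ← ENNReal.ofReal_coe_nnreal]
    simp only [EReal.real_coe_toENNReal]
    rcases le_total t 0 with h | h
    · rw [ENNReal.ofReal_of_nonpos h, zero_add,
        ← ENNReal.ofReal_add K.coe_nonneg (neg_nonneg.2 h), sub_eq_add_neg]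
    · rw [ENNReal.ofReal_of_nonpos (neg_nonpos.2 h), add_zero,
        ← ENNReal.ofReal_add h (sub_nonneg.2 htK), add_sub_cancel]

theorem coe_ennreal_sub_eq_sub_of_add_eq_add {a b c d : ℝ≥0∞} (ha : a ≠ ⊤) (hc : c ≠ ⊤)
    (h : a + d = c + b) : (a : EReal) - b = c - d := by
  lift a to NNReal using ha
  lift c to NNReal using hc
  induction b with
  | top =>
    obtain rfl : d = ⊤ := by simpa using h
    simp
  | coe b =>
    induction d with
    | top => simp [← ENNReal.coe_add] at h
    | coe d =>
      have h_real : (a + d : ℝ) = c + b := by exact_mod_cast h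
      change ((a - b : ℝ) : EReal) = ((c - d : ℝ) : EReal)
      rw [sub_eq_sub_iff_add_eq_add.2 h_real]

theorem erealIntegral_eq_mul_measure_univ_sub {α : Type*} [MeasurableSpace α] {μ : Measure α}
    [IsFiniteMeasure μ] {u : α → EReal} (hu : Measurable u) {K : NNReal}
    (huK : ∀ y, u y ≤ (K : ℝ)) :
    erealIntegral μ u =
      ((K * μ univ : ℝ≥0∞) : EReal) - (∫⁻ y, ((K : ℝ) - u y).toENNReal ∂μ : ℝ≥0∞) := by
  have h_add : ∫⁻ y, (u y).toENNReal ∂μ + ∫⁻ y, ((K : ℝ) - u y).toENNReal ∂μ =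
      K * μ univ + ∫⁻ y, (-u y).toENNReal ∂μ := by
    rw [← lintegral_const, ← lintegral_add_left hu.ereal_toENNReal,
      ← lintegral_add_left measurable_const]
    exact lintegral_congr fun y => toENNReal_add_toENNReal_coe_sub (huK y)
  have h_pos_le : ∫⁻ y, (u y).toENNReal ∂μ ≤ K * μ univ := by
    rw [← lintegral_const]
    refine lintegral_mono fun y => (EReal.toENNReal_le_toENNReal (huK y)).trans_eq ?_
    rw [EReal.real_coe_toENNReal, ENNReal.ofReal_coe_nnreal]
  have h_mass : K * μ univ ≠ ⊤ := by finiteness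
  simp only [erealIntegral, erealToENNReal_eq_toENNReal]
  exact coe_ennreal_sub_eq_sub_of_add_eq_add (ne_top_of_le_ne_top h_mass h_pos_le) h_mass h_add

theorem continuous_coe_sub_ereal (K : ℝ) : Continuous fun t : EReal => (K : EReal) - t :=
  continuous_iff_continuousAt.2 fun t =>
    (EReal.continuousAt_add (p := ((K : EReal), -t)) (by simp) (by simp)).comp
      (f := fun t : EReal => ((K : EReal), -t)) (by fun_prop)

theorem upperSemicontinuous_erealIntegral_finiteMeasure {X : Type*} [TopologicalSpace X]
    [HasOuterApproxClosed X] [MeasurableSpace X] [OpensMeasurableSpace X] {u : X → EReal}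
    (hu : UpperSemicontinuous u) {K : ℝ} (huK : ∀ y, u y ≤ K) :
    UpperSemicontinuous fun μ : FiniteMeasure X => erealIntegral (μ : Measure X) u := by
  have huK' (y : X) : u y ≤ (K.toNNReal : ℝ) :=
    (huK y).trans (EReal.coe_le_coe_iff.2 K.le_coe_toNNReal)
  have h_lsc : LowerSemicontinuous fun y => ((K.toNNReal : ℝ) - u y).toENNReal :=
    (EReal.continuous_toENNReal.comp
      (continuous_coe_sub_ereal K.toNNReal)).comp_upperSemicontinuous_antitone hu
      fun s t hst => EReal.toENNReal_le_toENNReal (EReal.sub_le_sub le_rfl hst)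
  have h_mass : Continuous fun μ : FiniteMeasure X =>
      ((K.toNNReal * μ.mass : ℝ≥0∞) : EReal) :=
    continuous_coe_ennreal_ereal.comp <| (ENNReal.continuous_const_mul ENNReal.coe_ne_top).comp <|
      ENNReal.continuous_coe.comp FiniteMeasure.continuous_mass
  have h_int := continuous_coe_ennreal_ereal.comp_lowerSemicontinuous
    (lowerSemicontinuous_lintegral_finiteMeasure h_lsc) EReal.coe_ennreal_strictMono.monotone
  have h_neg := continuous_neg.comp_lowerSemicontinuous_antitone h_int fun s t =>
    EReal.neg_le_neg_iff.2
  simp only [erealIntegral_eq_mul_measure_univ_sub hu.measurable huK', ← FiniteMeasure.ennreal_mass]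
  refine h_mass.upperSemicontinuous.add' h_neg fun μ => ?_
  have h_ne_top : ((K.toNNReal * μ.mass : ℝ≥0∞) : EReal) ≠ ⊤ :=
    EReal.coe_ennreal_eq_top_iff.not.2 (by finiteness)
  have h_ne_bot : ((K.toNNReal * μ.mass : ℝ≥0∞) : EReal) ≠ ⊥ := EReal.coe_ennreal_ne_bot _
  exact EReal.continuousAt_add (.inl h_ne_top) (.inl h_ne_bot)

end ERealIntegral

section Edwards

theorem edwardsS_le {X : Type*} (F : Set (X → EReal)) (x : X) (g : X → EReal) :
    edwardsS F x g ≤ g x :=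
  sSup_le fun _ ⟨_, _, hug, ht⟩ => ht ▸ hug x

variable {X : Type*} [TopologicalSpace X] [HasOuterApproxClosed X] [MeasurableSpace X]
  {F : Set (X → EReal)} {x : X}

theorem isClosed_setOf_mem_edwardsM [OpensMeasurableSpace X]
    (husc : ∀ u ∈ F, UpperSemicontinuous u) (hbdd : ∀ u ∈ F, ∃ K : ℝ, ∀ y, u y ≤ K) :
    IsClosed {μ : FiniteMeasure X | (μ : Measure X) ∈ edwardsM F x} := by
  have h_eq : {μ : FiniteMeasure X | (μ : Measure X) ∈ edwardsM F x} =
      ⋂ u ∈ F, {μ : FiniteMeasure X | u x ≤ erealIntegral (μ : Measure X) u} := by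
    ext μ
    simp [edwardsM]
  rw [h_eq]
  refine isClosed_biInter fun u hu => ?_
  obtain ⟨K, hK⟩ := hbdd u hu
  exact (upperSemicontinuous_erealIntegral_finiteMeasure (husc u hu) hK).isClosed_preimage (u x)

theorem edwardsC_weakStar_compact_general [CompactSpace X] [T2Space X] [BorelSpace X]
    (husc : ∀ u ∈ F, UpperSemicontinuous u) (hbdd : ∀ u ∈ F, ∃ K : ℝ, ∀ y, u y ≤ K)
    (hx : ⊥ < edwardsS F x (fun _ => (-1 : EReal))) :
    IsCompact { μ : FiniteMeasure X |
      (μ : Measure X) ∈ edwardsM F x ∧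
      (((μ : Measure X) Set.univ : ℝ≥0∞) : EReal) ≤
        -(edwardsS F x (fun _ => (-1 : EReal))) } := by
  have h_nonneg : 0 ≤ -edwardsS F x (fun _ => (-1 : EReal)) :=
    EReal.neg_nonneg.2 ((edwardsS_le F x _).trans (by norm_num))
  have h_ne_top : -edwardsS F x (fun _ => (-1 : EReal)) ≠ ⊤ := by
    simpa only [ne_eq, EReal.neg_eq_top_iff] using hx.ne'
  obtain ⟨c, hc⟩ : ∃ c : NNReal, ((c : ℝ≥0∞) : EReal) = -edwardsS F x (fun _ => (-1 : EReal)) := by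
    lift -edwardsS F x (fun _ => (-1 : EReal)) to ℝ using
      ⟨h_ne_top, ne_bot_of_le_ne_bot EReal.zero_ne_bot h_nonneg⟩ with C
    exact ⟨⟨C, EReal.coe_nonneg.1 h_nonneg⟩, rfl⟩
  simp only [← hc, EReal.coe_ennreal_le_coe_ennreal_iff, ← FiniteMeasure.ennreal_mass,
    ENNReal.coe_le_coe]
  exact (isCompact_setOfPred_finiteMeasure_le_of_compactSpace X c).inter_left
    (isClosed_setOf_mem_edwardsM husc hbdd)

end Edwards

/-- `C_x^F` is compact in the weak* topology on positive (finite) Borel measures on `X`,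
whenever `S_x(-𝟙) > -∞`. -/
theorem edwardsC_weakStar_compact {X : Type*} [MetricSpace X] [CompactSpace X]
    [MeasurableSpace X] [BorelSpace X] (F : Set (X → EReal)) (hF : IsEdwardsCone F)
    (x : X) (hx : ⊥ < edwardsS F x (fun _ => (-1 : EReal))) :
    IsCompact { μ : FiniteMeasure X |
      (μ : Measure X) ∈ edwardsM F x ∧
      (((μ : Measure X) Set.univ : ℝ≥0∞) : EReal) ≤
        -(edwardsS F x (fun _ => (-1 : EReal))) } :=
  edwardsC_weakStar_compact_general hF.1 hF.2.1 hx

end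
end

section
/- In the Edwards setting, let x ∈ X satisfy S_x(−𝟙) > −∞ and let g : X → ℝ be continuous. Then S_x(g) is finite and there exists a measure μ ∈ C_x^F with ∫ g dμ = S_x(g); in particular S_x(g) = I_x(g). -/
open MeasureTheory Filter Set
open scoped ENNReal

noncomputable section

/-!
Where `S_x(-𝟙) > -∞`, the map `h ↦ S_x(h)` is a finite, monotone, superlinear functional on
`C(X, ℝ)`. By Hahn-Banach it lies below a linear functional which agrees with it at `g`; this
functional is nonnegative on nonnegative functions, hence, by Riesz-Markov-Kakutani, integration
against a regular measure `μ`. So `S_x(h) ≤ ∫ h dμ` for all continuous `h`, with equality at `g`,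
and `h = -𝟙` bounds the mass of `μ`. To see `u(x) ≤ ∫ u dμ` for `u ∈ F`, note that
`u(x) ≤ S_x(h) ≤ ∫ h dμ` for every continuous `h ≥ u`, and that, `μ` being regular, `∫ u dμ` is the
infimum of these `∫ h dμ`: truncate `u` from below, approximate it from above by a lower
semicontinuous function (Vitali-Carathéodory), and insert a continuous function between the two.
-/

section ErealIntegral

variable {α : Type*} [MeasurableSpace α] {μ : Measure α}

theorem erealToENNReal_eq_toENNReal_s7 (x : EReal) : erealToENNReal x = x.toENNReal := rfl

theorem erealIntegral_mono {f g : α → EReal} (hfg : ∀ a, f a ≤ g a) :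
    erealIntegral μ f ≤ erealIntegral μ g :=
  EReal.sub_le_sub
    (EReal.coe_ennreal_le_coe_ennreal_iff.2
      (lintegral_mono fun a => EReal.toENNReal_le_toENNReal (hfg a)))
    (EReal.coe_ennreal_le_coe_ennreal_iff.2
      (lintegral_mono fun a => EReal.toENNReal_le_toENNReal (EReal.neg_le_neg_iff.2 (hfg a))))

theorem erealIntegral_coe {f : α → ℝ} (hf : Integrable f μ) :
    erealIntegral μ (fun a => (f a : EReal)) = ((∫ a, f a ∂μ : ℝ) : EReal) := by
  have hpos : ∫⁻ a, ENNReal.ofReal (f a) ∂μ ≠ ⊤ := hf.lintegral_lt_top.ne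
  have hneg : ∫⁻ a, ENNReal.ofReal (-f a) ∂μ ≠ ⊤ := hf.neg.lintegral_lt_top.ne
  rw [integral_eq_lintegral_pos_part_sub_lintegral_neg_part hf, EReal.coe_sub,
    EReal.coe_ennreal_toReal hpos, EReal.coe_ennreal_toReal hneg]
  rfl

theorem ereal_coe_ennreal_sub_iSup {ι : Type*} [Nonempty ι] {a : ℝ≥0∞} (ha : a ≠ ⊤)
    (b : ι → ℝ≥0∞) :
    (a : EReal) - ((⨆ i, b i : ℝ≥0∞) : EReal) = ⨅ i, ((a : EReal) - (b i : EReal)) := by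
  have hcont : Continuous fun t : ℝ≥0∞ => (a : EReal) - (t : EReal) := by
    have hcoe : Continuous fun t : ℝ≥0∞ => ((a : EReal), -(t : EReal)) :=
      continuous_const.prodMk (continuous_neg.comp continuous_coe_ennreal_ereal)
    have hadd (t : ℝ≥0∞) :
        ContinuousAt (fun p : EReal × EReal => p.1 + p.2) ((a : EReal), -(t : EReal)) :=
      EReal.continuousAt_add (.inl (EReal.coe_ennreal_eq_top_iff.not.2 ha))
        (.inl (EReal.coe_ennreal_ne_bot a))
    exact continuous_iff_continuousAt.2 fun t =>
      (hadd t).comp (f := fun t : ℝ≥0∞ => ((a : EReal), -(t : EReal))) hcoe.continuousAt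
  have hanti : Antitone fun t : ℝ≥0∞ => (a : EReal) - (t : EReal) := fun s t hst =>
    EReal.sub_le_sub le_rfl (EReal.coe_ennreal_le_coe_ennreal_iff.2 hst)
  exact Antitone.map_ciSup_of_continuousAt hcont.continuousAt hanti (OrderTop.bddAbove _)

theorem erealIntegral_eq_iInf_max_neg_natCast {f : α → EReal} (hf : Measurable f)
    (hpos : ∫⁻ a, (f a).toENNReal ∂μ ≠ ⊤) :
    erealIntegral μ f = ⨅ n : ℕ, erealIntegral μ (fun a => max (f a) (-(n : EReal))) := by
  have hmono : Monotone EReal.toENNReal := fun _ _ => EReal.toENNReal_le_toENNReal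
  have hmax (n : ℕ) (t : EReal) : (max t (-(n : EReal))).toENNReal = t.toENNReal := by
    have hn : (-(n : EReal)).toENNReal = 0 := EReal.toENNReal_of_nonpos (by simp)
    rw [hmono.map_max, hn]
    exact max_eq_left zero_le
  have hmin (n : ℕ) (t : EReal) :
      (-max t (-(n : EReal))).toENNReal = min (-t).toENNReal n := by
    have hneg : -max t (-(n : EReal)) = min (-t) n := by
      rw [← EReal.min_neg_neg, neg_neg]
    rw [hneg, hmono.map_min, ← EReal.coe_coe_eq_natCast, EReal.real_coe_toENNReal,
      ENNReal.ofReal_natCast]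
  have hsup : ∫⁻ a, (-f a).toENNReal ∂μ = ⨆ n : ℕ, ∫⁻ a, min (-f a).toENNReal n ∂μ := by
    rw [← lintegral_iSup (fun n => by fun_prop) fun m n hmn a => by gcongr]
    refine lintegral_congr fun a => ?_
    rw [← inf_iSup_eq, ENNReal.iSup_natCast, inf_top_eq]
  simp only [erealIntegral, erealToENNReal_eq_toENNReal_s7, hmax, hmin]
  rw [hsup, ereal_coe_ennreal_sub_iSup hpos]

end ErealIntegral

section UpperSemicontinuous

variable {X : Type*} [TopologicalSpace X] [NormalSpace X]

theorem exists_continuousMap_between [ParacompactSpace X] {u v : X → EReal}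
    (hu : UpperSemicontinuous u) (hv : LowerSemicontinuous v) (huv : ∀ x, u x < v x) :
    ∃ h : C(X, ℝ), ∀ x, u x < h x ∧ (h x : EReal) < v x := by
  refine exists_continuous_forall_mem_convex_of_local_const
    (t := fun x => {r : ℝ | u x < r ∧ (r : EReal) < v x}) (fun x => ?_) fun x => ?_
  · refine Set.OrdConnected.convex ⟨fun r hr s hs t ht => ?_⟩
    exact ⟨hr.1.trans_le (EReal.coe_le_coe_iff.2 ht.1),
      (EReal.coe_le_coe_iff.2 ht.2).trans_lt hs.2⟩
  · obtain ⟨r, hur, hrv⟩ := EReal.lt_iff_exists_real_btwn.1 (huv x)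
    exact ⟨r, (hu x r hur).and (hv x r hrv)⟩

variable [MeasurableSpace X] [BorelSpace X] {μ : Measure X} [μ.WeaklyRegular]

theorem exists_continuousMap_gt_integral_lt [ParacompactSpace X] [SigmaFinite μ] {f : X → ℝ}
    (hf : UpperSemicontinuous f) (hfi : Integrable f μ) {ε : ℝ} (hε : 0 < ε) :
    ∃ h : C(X, ℝ), (∀ x, f x < h x) ∧ Integrable h μ ∧ ∫ x, h x ∂μ < ∫ x, f x ∂μ + ε := by
  obtain ⟨v, hfv, hv, hvi, hv_top, hv_lt⟩ := exists_lt_lowerSemicontinuous_integral_lt f hfi hε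
  obtain ⟨h, hh⟩ := exists_continuousMap_between
    (continuous_coe_real_ereal.comp_upperSemicontinuous hf fun _ _ => EReal.coe_le_coe_iff.2)
    hv hfv
  have hfh (x : X) : f x < h x := EReal.coe_lt_coe_iff.1 (hh x).1
  have hhv : ∀ᵐ x ∂μ, h x ≤ (v x).toReal := by
    filter_upwards [hv_top] with x hx
    exact EReal.coe_le_coe_iff.1 ((hh x).2.le.trans (EReal.le_coe_toReal hx.ne))
  have hhi : Integrable h μ := integrable_of_le_of_le h.continuous.aestronglyMeasurable
    (ae_of_all _ fun x => (hfh x).le) hhv hfi hvi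
  exact ⟨h, hfh, hhi, (integral_mono_ae hhi hvi hhv).trans_lt hv_lt⟩

variable [IsFiniteMeasure μ]

theorem iInf_continuousMap_le_erealIntegral [ParacompactSpace X] {u : X → EReal}
    (hu : UpperSemicontinuous u) {a b : ℝ} (hau : ∀ x, a ≤ u x) (hub : ∀ x, u x ≤ b) :
    ⨅ (h : C(X, ℝ)) (_ : ∀ x, u x ≤ h x), ((∫ x, h x ∂μ : ℝ) : EReal) ≤ erealIntegral μ u := by
  lift u to X → ℝ using fun x =>
    ⟨((hub x).trans_lt (EReal.coe_lt_top b)).ne, ((EReal.bot_lt_coe a).trans_le (hau x)).ne'⟩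
  simp only [EReal.coe_le_coe_iff] at hau hub ⊢
  have husc : UpperSemicontinuous u := fun x r hr => by
    simpa only [EReal.coe_lt_coe_iff] using hu x r (EReal.coe_lt_coe_iff.2 hr)
  have hui : Integrable u μ :=
    .of_mem_Icc a b husc.measurable.aemeasurable (ae_of_all _ fun x => ⟨hau x, hub x⟩)
  rw [erealIntegral_coe hui]
  refine EReal.le_of_forall_lt_iff_le.1 fun r hr => ?_
  obtain ⟨h, huh, -, hlt⟩ := exists_continuousMap_gt_integral_lt husc hui
    (sub_pos.2 (EReal.coe_lt_coe_iff.1 hr))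
  rw [add_sub_cancel] at hlt
  exact iInf₂_le_of_le h (fun x => (huh x).le) (EReal.coe_le_coe_iff.2 hlt.le)

theorem erealIntegral_eq_iInf_continuousMap [CompactSpace X] {u : X → EReal}
    (hu : UpperSemicontinuous u) {b : ℝ} (hub : ∀ x, u x ≤ b) :
    erealIntegral μ u
      = ⨅ (h : C(X, ℝ)) (_ : ∀ x, u x ≤ h x), ((∫ x, h x ∂μ : ℝ) : EReal) := by
  refine le_antisymm (le_iInf₂ fun h huh => ?_) ?_
  · rw [← erealIntegral_coe (h.continuous.integrable_of_hasCompactSupport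
      (HasCompactSupport.of_compactSpace h))]
    exact erealIntegral_mono huh
  have hpos : ∫⁻ x, (u x).toENNReal ∂μ ≠ ⊤ := by
    refine ((lintegral_mono fun x => EReal.toENNReal_le_toENNReal (hub x)).trans_lt ?_).ne
    exact lintegral_const_lt_top ENNReal.ofReal_ne_top
  rw [erealIntegral_eq_iInf_max_neg_natCast hu.measurable hpos]
  refine le_iInf fun n => ?_
  have husc : UpperSemicontinuous fun x => max (u x) (-(n : EReal)) :=
    hu.sup upperSemicontinuous_const
  calc ⨅ (h : C(X, ℝ)) (_ : ∀ x, u x ≤ h x), ((∫ x, h x ∂μ : ℝ) : EReal)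
      ≤ ⨅ (h : C(X, ℝ)) (_ : ∀ x, max (u x) (-(n : EReal)) ≤ h x),
          ((∫ x, h x ∂μ : ℝ) : EReal) :=
        le_iInf₂ fun h hh => iInf₂_le h fun x => (le_max_left _ _).trans (hh x)
    _ ≤ erealIntegral μ fun x => max (u x) (-(n : EReal)) :=
        iInf_continuousMap_le_erealIntegral husc (a := -n) (b := max b (-n))
          (fun x => by simp) fun x => by
            rw [EReal.coe_strictMono.monotone.map_max]
            exact max_le_max_right _ (hub x)

end UpperSemicontinuous

/-- Superlinear functionals on a real vector space: positively homogeneous and superadditive.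
Homogeneity is required for strictly positive scalars only, and implies `p 0 = 0`. -/
structure IsSuperlinear {E : Type*} [AddCommGroup E] [Module ℝ E] (p : E → ℝ) : Prop where
  map_smul : ∀ c : ℝ, 0 < c → ∀ v, p (c • v) = c * p v
  add_le : ∀ v w, p v + p w ≤ p (v + w)

namespace IsSuperlinear

variable {E : Type*} [AddCommGroup E] [Module ℝ E] {p : E → ℝ}

theorem map_zero (hp : IsSuperlinear p) : p 0 = 0 := by
  have h := hp.map_smul 2 two_pos 0
  rw [smul_zero] at h
  linarith

theorem map_smul_le (hp : IsSuperlinear p) (c : ℝ) (v : E) : p (c • v) ≤ c * p v := by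
  rcases lt_trichotomy c 0 with hc | rfl | hc
  · have h := hp.add_le (c • v) (-c • v)
    rw [← add_smul, add_neg_cancel, zero_smul, hp.map_zero, hp.map_smul _ (neg_pos.2 hc)] at h
    linarith
  · simp [hp.map_zero]
  · exact (hp.map_smul c hc v).le

theorem exists_linearMap_ge (hp : IsSuperlinear p) (v : E) :
    ∃ φ : E →ₗ[ℝ] ℝ, φ v = p v ∧ ∀ w, p w ≤ φ w := by
  have hv (c : ℝ) (hc : c • v = 0) : c • p v = 0 := by
    rcases smul_eq_zero.1 hc with rfl | rfl
    · exact zero_smul ℝ _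
    · rw [hp.map_zero, smul_zero]
  obtain ⟨φ, hφv, hφ⟩ := exists_extension_of_le_sublinear
    (LinearPMap.mkSpanSingleton' v (p v) hv) (fun w => -p (-w))
    (fun c hc w => by rw [← smul_neg, hp.map_smul c hc, mul_neg])
    (fun w z => by rw [neg_add]; linarith [hp.add_le (-w) (-z)])
    (by
      rintro ⟨_, hw⟩
      obtain ⟨c, rfl⟩ := Submodule.mem_span_singleton.1 hw
      have h := hp.map_smul_le (-c) v
      rw [neg_smul] at h
      rw [LinearPMap.mkSpanSingleton'_apply, RingHom.id_apply, smul_eq_mul]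
      linarith)
  refine ⟨φ, ?_, fun w => ?_⟩
  · exact (hφv ⟨v, Submodule.mem_span_singleton_self v⟩).trans
      (LinearPMap.mkSpanSingleton'_apply_self v (p v) hv _)
  · have h := hφ (-w)
    rw [neg_neg, map_neg] at h
    linarith

end IsSuperlinear

theorem exists_regular_measure_integral_eq {X : Type*} [TopologicalSpace X] [T2Space X]
    [CompactSpace X] [MeasurableSpace X] [BorelSpace X] (φ : C(X, ℝ) →ₗ[ℝ] ℝ)
    (hφ : ∀ h : C(X, ℝ), 0 ≤ h → 0 ≤ φ h) :
    ∃ μ : Measure X, μ.Regular ∧ ∀ h : C(X, ℝ), ∫ y, h y ∂μ = φ h := by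
  let ψ : CompactlySupportedContinuousMap X ℝ →ₗ[ℝ] ℝ :=
    { toFun := fun h => φ h.toContinuousMap
      map_add' := fun h k => φ.map_add h.toContinuousMap k.toContinuousMap
      map_smul' := fun c h => φ.map_smul c h.toContinuousMap }
  let Λ := PositiveLinearMap.mk₀ ψ fun h hh => hφ h.toContinuousMap hh
  exact ⟨RealRMK.rieszMeasure Λ, inferInstance, fun h =>
    RealRMK.integral_rieszMeasure Λ ⟨h, HasCompactSupport.of_compactSpace _⟩⟩

theorem IsSuperlinear.exists_regular_measure_integral_ge {X : Type*} [TopologicalSpace X]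
    [T2Space X] [CompactSpace X] [MeasurableSpace X] [BorelSpace X] {p : C(X, ℝ) → ℝ}
    (hp : IsSuperlinear p) (hmono : Monotone p) (g : C(X, ℝ)) :
    ∃ μ : Measure X, μ.Regular ∧ ∫ y, g y ∂μ = p g ∧ ∀ h : C(X, ℝ), p h ≤ ∫ y, h y ∂μ := by
  obtain ⟨φ, hφg, hφ⟩ := hp.exists_linearMap_ge g
  have hφ_nonneg (h : C(X, ℝ)) (hh : 0 ≤ h) : 0 ≤ φ h :=
    hp.map_zero.symm.trans_le ((hmono hh).trans (hφ h))
  obtain ⟨μ, hμ, hμφ⟩ := exists_regular_measure_integral_eq φ hφ_nonneg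
  exact ⟨μ, hμ, (hμφ g).trans hφg, fun h => (hφ h).trans_eq (hμφ h).symm⟩

section EdwardsS

variable {X : Type*} {F : Set (X → EReal)} {x : X} {g h u : X → EReal}

theorem le_edwardsS (hu : u ∈ F) (hug : ∀ y, u y ≤ g y) : u x ≤ edwardsS F x g :=
  le_sSup ⟨u, hu, hug, rfl⟩

theorem edwardsS_le_iff {a : EReal} :
    edwardsS F x g ≤ a ↔ ∀ u ∈ F, (∀ y, u y ≤ g y) → u x ≤ a := by
  simp only [edwardsS, sSup_le_iff, mem_ofPred_eq]
  refine ⟨fun H u hu hug => H _ ⟨u, hu, hug, rfl⟩, ?_⟩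
  rintro H _ ⟨u, hu, hug, rfl⟩
  exact H u hu hug

theorem lt_edwardsS_iff {a : EReal} :
    a < edwardsS F x g ↔ ∃ u ∈ F, (∀ y, u y ≤ g y) ∧ a < u x := by
  simpa only [not_le, not_forall, exists_prop] using (edwardsS_le_iff (a := a)).not

theorem edwardsS_mono (hgh : ∀ y, g y ≤ h y) : edwardsS F x g ≤ edwardsS F x h :=
  edwardsS_le_iff.2 fun _ hu hug => le_edwardsS hu fun y => (hug y).trans (hgh y)

theorem edwardsS_le_self (F : Set (X → EReal)) (x : X) (g : X → EReal) : edwardsS F x g ≤ g x :=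
  edwardsS_le_iff.2 fun _ _ hug => hug x

theorem edwardsS_coe_ne_top (g : X → ℝ) :
    edwardsS F x (fun y => (g y : EReal)) ≠ ⊤ :=
  ((edwardsS_le_self F x _).trans_lt (EReal.coe_lt_top (g x))).ne

theorem edwardsS_le_edwardsI [MeasurableSpace X] : edwardsS F x g ≤ edwardsI F x g := by
  refine edwardsS_le_iff.2 fun u hu hug => le_sInf ?_
  rintro _ ⟨μ, hμ, rfl⟩
  exact (hμ u hu).trans (erealIntegral_mono hug)

end EdwardsS

/-- The functional `g ↦ S_x(g)` on `C(X, ℝ)`, with real values: the infinite values of `S_x` are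
replaced by `0`. When `S_x(-𝟙) > -∞` nothing is lost, by `IsEdwardsCone.coe_edwardsFunctional`. -/
def edwardsFunctional {X : Type*} [TopologicalSpace X] (F : Set (X → EReal)) (x : X)
    (g : C(X, ℝ)) : ℝ :=
  (edwardsS F x (fun y => (g y : EReal))).toReal

namespace IsEdwardsCone

variable {X : Type*} [TopologicalSpace X] {F : Set (X → EReal)} {x : X}

theorem edwardsS_add_le (hF : IsEdwardsCone F) (g h : X → EReal) :
    edwardsS F x g + edwardsS F x h ≤ edwardsS F x (fun y => g y + h y) := by
  refine EReal.add_le_of_forall_lt fun a ha b hb => ?_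
  obtain ⟨u, hu, hug, hau⟩ := lt_edwardsS_iff.1 ha
  obtain ⟨v, hv, hvh, hbv⟩ := lt_edwardsS_iff.1 hb
  exact (add_le_add hau.le hbv.le).trans
    (le_edwardsS (hF.2.2.2 u hu v hv) fun y => add_le_add (hug y) (hvh y))

theorem mul_edwardsS_le (hF : IsEdwardsCone F) {c : ℝ} (hc : 0 < c) (g : X → EReal) :
    c * edwardsS F x g ≤ edwardsS F x (fun y => c * g y) := by
  have hc₀ : (0 : EReal) < c := EReal.coe_pos.2 hc
  rw [mul_comm, ← EReal.le_div_iff_mul_le hc₀ (EReal.coe_ne_top c), edwardsS_le_iff]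
  intro u hu hug
  rw [EReal.le_div_iff_mul_le hc₀ (EReal.coe_ne_top c), mul_comm]
  exact le_edwardsS (hF.2.2.1 u hu c hc) fun y => mul_le_mul_of_nonneg_left (hug y) hc₀.le

theorem edwardsS_const_mul (hF : IsEdwardsCone F) {c : ℝ} (hc : 0 < c) (g : X → EReal) :
    edwardsS F x (fun y => c * g y) = c * edwardsS F x g := by
  refine le_antisymm ?_ (hF.mul_edwardsS_le hc g)
  have hinv (t : EReal) : (c : EReal) * (((c⁻¹ : ℝ) : EReal) * t) = t := by
    rw [← mul_assoc, ← EReal.coe_mul, mul_inv_cancel₀ hc.ne', EReal.coe_one, one_mul]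
  have hinv' (t : EReal) : ((c⁻¹ : ℝ) : EReal) * ((c : EReal) * t) = t := by
    rw [← mul_assoc, ← EReal.coe_mul, inv_mul_cancel₀ hc.ne', EReal.coe_one, one_mul]
  have h := hF.mul_edwardsS_le (x := x) (inv_pos.2 hc) (fun y => (c : EReal) * g y)
  simp only [hinv'] at h
  rw [← hinv (edwardsS F x _)]
  exact mul_le_mul_of_nonneg_left h (EReal.coe_nonneg.2 hc.le)

theorem edwardsS_ne_bot_of_le (hF : IsEdwardsCone F)
    (hx : ⊥ < edwardsS F x (fun _ => (-1 : EReal))) {g : X → EReal} {c : ℝ} (hc : 0 < c)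
    (hg : ∀ y, -c ≤ g y) : edwardsS F x g ≠ ⊥ := by
  have hS_top : edwardsS F x (fun _ => (-1 : EReal)) ≠ ⊤ :=
    ((edwardsS_le_self F x _).trans_lt (EReal.coe_lt_top (-1))).ne
  have hle : c * edwardsS F x (fun _ => (-1 : EReal)) ≤ edwardsS F x g := by
    refine (hF.mul_edwardsS_le hc _).trans (edwardsS_mono fun y => ?_)
    simpa using hg y
  lift edwardsS F x (fun _ => (-1 : EReal)) to ℝ using ⟨hS_top, hx.ne'⟩ with s
  exact ((EReal.bot_lt_coe (c * s)).trans_le hle).ne'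

variable [CompactSpace X]

theorem edwardsS_continuousMap_ne_bot (hF : IsEdwardsCone F)
    (hx : ⊥ < edwardsS F x (fun _ => (-1 : EReal))) (g : C(X, ℝ)) :
    edwardsS F x (fun y => (g y : EReal)) ≠ ⊥ :=
  hF.edwardsS_ne_bot_of_le hx (c := ‖g‖ + 1) (by positivity) fun y =>
    EReal.coe_le_coe_iff.2 <| by linarith [neg_le_of_abs_le (g.norm_coe_le_norm y)]

theorem coe_edwardsFunctional (hF : IsEdwardsCone F)
    (hx : ⊥ < edwardsS F x (fun _ => (-1 : EReal))) (g : C(X, ℝ)) :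
    (edwardsFunctional F x g : EReal) = edwardsS F x (fun y => (g y : EReal)) :=
  EReal.coe_toReal (edwardsS_coe_ne_top g) (hF.edwardsS_continuousMap_ne_bot hx g)

theorem monotone_edwardsFunctional (hF : IsEdwardsCone F)
    (hx : ⊥ < edwardsS F x (fun _ => (-1 : EReal))) : Monotone (edwardsFunctional F x) :=
  fun g h hgh => by
    rw [← EReal.coe_le_coe_iff, hF.coe_edwardsFunctional hx, hF.coe_edwardsFunctional hx]
    exact edwardsS_mono fun y => EReal.coe_le_coe_iff.2 (hgh y)

theorem isSuperlinear_edwardsFunctional (hF : IsEdwardsCone F)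
    (hx : ⊥ < edwardsS F x (fun _ => (-1 : EReal))) : IsSuperlinear (edwardsFunctional F x) where
  map_smul c hc g := by
    rw [← EReal.coe_eq_coe_iff, EReal.coe_mul]
    simpa only [hF.coe_edwardsFunctional hx, ContinuousMap.smul_apply, smul_eq_mul,
      EReal.coe_mul] using hF.edwardsS_const_mul hc fun y => (g y : EReal)
  add_le g h := by
    rw [← EReal.coe_le_coe_iff, EReal.coe_add]
    simpa only [hF.coe_edwardsFunctional hx, ContinuousMap.add_apply, EReal.coe_add] using
      hF.edwardsS_add_le (fun y => (g y : EReal)) fun y => (h y : EReal)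

variable [NormalSpace X] [MeasurableSpace X] [BorelSpace X] {μ : Measure X} [IsFiniteMeasure μ]
  [μ.WeaklyRegular]

theorem mem_edwardsM_of_edwardsS_le_integral (hF : IsEdwardsCone F)
    (hμ : ∀ h : C(X, ℝ), edwardsS F x (fun y => (h y : EReal)) ≤ ((∫ y, h y ∂μ : ℝ) : EReal)) :
    μ ∈ edwardsM F x := by
  intro u hu
  obtain ⟨b, hub⟩ := hF.2.1 u hu
  rw [erealIntegral_eq_iInf_continuousMap (hF.1 u hu) hub]
  exact le_iInf₂ fun h huh => (le_edwardsS hu huh).trans (hμ h)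

theorem mem_edwardsC_of_edwardsS_le_integral (hF : IsEdwardsCone F)
    (hμ : ∀ h : C(X, ℝ), edwardsS F x (fun y => (h y : EReal)) ≤ ((∫ y, h y ∂μ : ℝ) : EReal)) :
    μ ∈ edwardsC F x := by
  refine ⟨hF.mem_edwardsM_of_edwardsS_le_integral hμ, ?_⟩
  rw [EReal.le_neg, ← EReal.coe_ennreal_toReal (measure_ne_top μ univ)]
  simpa [Measure.real] using hμ (ContinuousMap.const X (-1))

end IsEdwardsCone

theorem edwards_continuous_case_general {X : Type*} [TopologicalSpace X] [T2Space X]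
    [CompactSpace X] [MeasurableSpace X] [BorelSpace X] (F : Set (X → EReal))
    (hF : IsEdwardsCone F) (x : X) (hx : ⊥ < edwardsS F x (fun _ => (-1 : EReal)))
    (g : X → ℝ) (hg : Continuous g) :
    (edwardsS F x (fun y => (g y : EReal)) ≠ ⊥ ∧
        edwardsS F x (fun y => (g y : EReal)) ≠ ⊤) ∧
    (∃ μ ∈ edwardsC F x, μ.Regular ∧
        erealIntegral μ (fun y => (g y : EReal)) = edwardsS F x (fun y => (g y : EReal))) ∧
    edwardsS F x (fun y => (g y : EReal)) = edwardsI F x (fun y => (g y : EReal)) := by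
  have hS := hF.coe_edwardsFunctional hx
  obtain ⟨μ, hμ_reg, hμg, hμ⟩ :=
    (hF.isSuperlinear_edwardsFunctional hx).exists_regular_measure_integral_ge
      (hF.monotone_edwardsFunctional hx) ⟨g, hg⟩
  have hSμ (h : C(X, ℝ)) :
      edwardsS F x (fun y => (h y : EReal)) ≤ ((∫ y, h y ∂μ : ℝ) : EReal) :=
    (hS h).symm.trans_le (EReal.coe_le_coe_iff.2 (hμ h))
  have hμC : μ ∈ edwardsC F x := hF.mem_edwardsC_of_edwardsS_le_integral hSμ
  have hμ_eq : erealIntegral μ (fun y => (g y : EReal)) = edwardsS F x (fun y => (g y : EReal)) :=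
    calc erealIntegral μ (fun y => (g y : EReal))
        = ((∫ y, g y ∂μ : ℝ) : EReal) := erealIntegral_coe
          (hg.integrable_of_hasCompactSupport (HasCompactSupport.of_compactSpace g))
      _ = (edwardsFunctional F x ⟨g, hg⟩ : EReal) := congrArg _ hμg
      _ = edwardsS F x (fun y => (g y : EReal)) := hS ⟨g, hg⟩
  exact ⟨⟨hF.edwardsS_continuousMap_ne_bot hx ⟨g, hg⟩, edwardsS_coe_ne_top g⟩,
    ⟨μ, hμC, hμ_reg, hμ_eq⟩,
    edwardsS_le_edwardsI.antisymm (sInf_le ⟨μ, hμC.1, hμ_eq.symm⟩)⟩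

/-- If `S_x(-𝟙) > -∞` and `g : X → ℝ` is continuous, then `S_x(g)` is finite, it is attained
as `∫ g dμ` for some `μ ∈ C_x^F`, and `S_x(g) = I_x(g)`. -/
theorem edwards_continuous_case {X : Type*} [MetricSpace X] [CompactSpace X]
    [MeasurableSpace X] [BorelSpace X] (F : Set (X → EReal)) (hF : IsEdwardsCone F)
    (x : X) (hx : ⊥ < edwardsS F x (fun _ => (-1 : EReal)))
    (g : X → ℝ) (hg : Continuous g) :
    (edwardsS F x (fun y => (g y : EReal)) ≠ ⊥ ∧
        edwardsS F x (fun y => (g y : EReal)) ≠ ⊤) ∧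
    (∃ μ ∈ edwardsC F x,
        erealIntegral μ (fun y => (g y : EReal)) = edwardsS F x (fun y => (g y : EReal))) ∧
    edwardsS F x (fun y => (g y : EReal)) = edwardsI F x (fun y => (g y : EReal)) := by
  obtain ⟨hS, ⟨μ, hμC, -, hμg⟩, hSI⟩ := edwards_continuous_case_general F hF x hx g hg
  exact ⟨hS, ⟨μ, hμC, hμg⟩, hSI⟩

end
end
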